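/- Let s₀,…,s_{k−1} ∈ ℝⁿ be nonzero vectors, let S = [s₀ ⋯ s_{k−1}] be the n×k matrix with these columns, and let U be the (non-strictly) upper triangular part of SᵀS, which is invertible since its diagonal entries sᵢᵀsᵢ are positive. Define the projections Vᵢ := I − sᵢsᵢᵀ/(sᵢᵀsᵢ). Then the product V₀ V₁ ⋯ V_{k−1} equals I − S U⁻¹ Sᵀ. -/

import Mathlib

/-! Peeling off the first factor, `(1 - u₀ w₀ᵀ) P = P - u₀ (w₀ᵀ P)`, shows that a product of factors
`1 - uᵢ wᵢᵀ` is `1 - ∑ uᵢ xᵢᵀ`, where `xᵢᵀ` is `wᵢᵀ` times the product of the later factors, that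
is, `xᵢ = wᵢ - ∑_{j > i} (wᵢ ⬝ uⱼ) xⱼ`. For `wᵢ = tᵢ / Uᵢᵢ` this recursion is exactly back
substitution for the upper triangular system `U X = Tᵀ` with `Uᵢⱼ = tᵢ ⬝ uⱼ` above the diagonal,
so `X = U⁻¹ Tᵀ`. -/

open Matrix

/-- The (non-strictly) upper triangular part of a square matrix. -/
def upperTriPart {m : ℕ} (M : Matrix (Fin m) (Fin m) ℝ) : Matrix (Fin m) (Fin m) ℝ :=
  Matrix.of fun i j => if i ≤ j then M i j else 0

open Finset

section OuterProducts

variable {m n o R : Type*}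

theorem mul_eq_sum_vecMulVec_col_row [Fintype m] [NonUnitalNonAssocSemiring R]
    (A : Matrix n m R) (B : Matrix m o R) :
    A * B = ∑ j, vecMulVec (A.col j) (B.row j) := by
  ext a b
  simp [Matrix.mul_apply, Matrix.sum_apply, vecMulVec_apply]

theorem vecMul_one_sub_sum_vecMulVec [Fintype m] [Fintype n] [DecidableEq n] [Ring R]
    (w : n → R) (u x : m → n → R) :
    w ᵥ* (1 - ∑ j, vecMulVec (u j) (x j)) = w - ∑ j, (w ⬝ᵥ u j) • x j := by
  simp_rw [vecMul_sub, vecMul_one, vecMul_sum, vecMul_vecMulVec]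

theorem prod_ofFn_one_sub_vecMulVec [Fintype n] [DecidableEq n] [Ring R] {k : ℕ}
    {u w x : Fin k → n → R} (hx : ∀ i, x i = w i - ∑ j ∈ Ioi i, (w i ⬝ᵥ u j) • x j) :
    (List.ofFn fun i => 1 - vecMulVec (u i) (w i)).prod = 1 - ∑ i, vecMulVec (u i) (x i) := by
  induction k with
  | zero => simp
  | succ k ih =>
    have tail : (List.ofFn fun i : Fin k => 1 - vecMulVec (u i.succ) (w i.succ)).prod =
        1 - ∑ i : Fin k, vecMulVec (u i.succ) (x i.succ) :=
      ih fun i => by rw [hx i.succ, Fin.sum_Ioi_succ]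
    have head : w 0 ᵥ* (1 - ∑ i : Fin k, vecMulVec (u i.succ) (x i.succ)) = x 0 := by
      rw [vecMul_one_sub_sum_vecMulVec, hx 0, Fin.sum_Ioi_zero]
    rw [List.ofFn_succ, List.prod_cons, tail, sub_mul, one_mul, vecMulVec_mul, head,
      Fin.sum_univ_succ, sub_add_eq_sub_sub_swap]

end OuterProducts

section UpperTriangular

variable {m n R : Type*} [Fintype m] [LinearOrder m] {U : Matrix m m R}

theorem isUnit_of_isUpperTriangular [CommRing R] (hU : U.IsUpperTriangular)
    (hdiag : ∀ i, IsUnit (U i i)) : IsUnit U := by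
  rw [isUnit_iff_isUnit_det, det_of_isUpperTriangular hU]
  exact IsUnit.prod_univ_iff.mpr hdiag

theorem row_mul_of_isUpperTriangular [LocallyFiniteOrderTop m] [NonUnitalNonAssocSemiring R]
    (hU : U.IsUpperTriangular) (X : Matrix m n R) (i : m) :
    (U * X).row i = U i i • X.row i + ∑ j ∈ Ioi i, U i j • X.row j :=
  calc
    (U * X).row i = ∑ j, U i j • X.row j := vecMul_eq_sum (U i) X
    _ = ∑ j ∈ Ici i, U i j • X.row j := .symm <| sum_subset (subset_univ _) fun j _ hj => by
      rw [hU (not_le.mp (mt mem_Ici.mpr hj)), zero_smul]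
    _ = U i i • X.row i + ∑ j ∈ Ioi i, U i j • X.row j := (add_sum_Ioi_eq_sum_Ici i).symm

theorem row_eq_of_isUpperTriangular_mul_eq [LocallyFiniteOrderTop m] [Ring R]
    (hU : U.IsUpperTriangular) {X B : Matrix m n R} (hX : U * X = B) {i : m} {c : R}
    (hc : c * U i i = 1) :
    X.row i = c • (B.row i - ∑ j ∈ Ioi i, U i j • X.row j) := by
  rw [← hX, row_mul_of_isUpperTriangular hU, add_sub_cancel_right, smul_smul, hc, one_smul]

end UpperTriangular

/-- For `S = T`, the diagonal `U i i = sᵢ ⬝ᵥ sᵢ` gives orthogonal projections, and half of it gives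
Householder reflections (the compact WY representation). -/
theorem product_of_projections_eq_general {n R : Type*} [Fintype n] [DecidableEq n] [CommRing R]
    {k : ℕ} (S T : Matrix n (Fin k) R) {U : Matrix (Fin k) (Fin k) R}
    (hU : U.IsUpperTriangular) (hUST : ∀ i j, i < j → U i j = (Tᵀ * S) i j)
    (c : Fin k → R) (hc : ∀ i, c i * U i i = 1) (V : Fin k → Matrix n n R)
    (hV : ∀ i, V i = 1 - c i • vecMulVec (S.col i) (T.col i)) :
    IsUnit U ∧ (List.ofFn V).prod = 1 - S * U⁻¹ * Tᵀ := by
  have hUunit : IsUnit U := isUnit_of_isUpperTriangular hU fun i => .of_mul_eq_one_right _ (hc i)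
  refine ⟨hUunit, ?_⟩
  set X := U⁻¹ * Tᵀ
  have hUX : U * X = Tᵀ :=
    mul_nonsing_inv_cancel_left _ _ ((isUnit_iff_isUnit_det U).mp hUunit)
  have hrow (i : Fin k) : X.row i =
      c i • T.col i - ∑ j ∈ Ioi i, ((c i • T.col i) ⬝ᵥ S.col j) • X.row j := by
    rw [row_eq_of_isUpperTriangular_mul_eq hU hUX (hc i), smul_sub, smul_sum, row_transpose]
    congr 1
    refine sum_congr rfl fun j hj => ?_
    have hUdot : U i j = T.col i ⬝ᵥ S.col j := hUST i j (mem_Ioi.mp hj)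
    rw [hUdot, smul_dotProduct, smul_assoc]
  have hVouter : V = fun i => 1 - vecMulVec (S.col i) (c i • T.col i) :=
    funext fun i => by rw [hV i, vecMulVec_smul]
  rw [hVouter, prod_ofFn_one_sub_vecMulVec hrow, ← mul_eq_sum_vecMulVec_col_row, Matrix.mul_assoc]

theorem isUpperTriangular_upperTriPart {m : ℕ} (M : Matrix (Fin m) (Fin m) ℝ) :
    (upperTriPart M).IsUpperTriangular :=
  fun _ _ hji => if_neg (not_le.mpr hji)

theorem upperTriPart_apply_of_le {m : ℕ} (M : Matrix (Fin m) (Fin m) ℝ) {i j : Fin m}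
    (hij : i ≤ j) : upperTriPart M i j = M i j :=
  if_pos hij

/-- for nonzero vectors `s₀, …, s_{k−1}` with `S = [s₀ ⋯ s_{k−1}]` and
`U` the upper triangular part of `SᵀS` (invertible), the product of the projections
`Vᵢ = I − sᵢsᵢᵀ/(sᵢᵀsᵢ)` satisfies `V₀ V₁ ⋯ V_{k−1} = I − S U⁻¹ Sᵀ`. -/
theorem product_of_projections_eq
    {n k : ℕ} (s : Fin k → (Fin n → ℝ)) (hs : ∀ i, s i ≠ 0)
    (S : Matrix (Fin n) (Fin k) ℝ) (hS : S = Matrix.of fun i j => s j i)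
    (U : Matrix (Fin k) (Fin k) ℝ) (hU : U = upperTriPart (Sᵀ * S))
    (V : Fin k → Matrix (Fin n) (Fin n) ℝ)
    (hV : ∀ i, V i = 1 - (s i ⬝ᵥ s i)⁻¹ • vecMulVec (s i) (s i)) :
    IsUnit U ∧
    ((List.ofFn V).prod = 1 - S * U⁻¹ * Sᵀ) := by
  subst hS hU
  refine product_of_projections_eq_general _ _ (isUpperTriangular_upperTriPart _)
    (fun i j hij => upperTriPart_apply_of_le _ hij.le) _ (fun i => ?_) V hV
  rw [upperTriPart_apply_of_le _ le_rfl]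
  exact inv_mul_cancel₀ (dotProduct_self_eq_zero.not.mpr (hs i))
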